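/- Let G be a group, n ≥ 2, g₁,…,gₙ ∈ G, h ∈ G, and for 1 ≤ j ≤ n let H_{j;h} : Gⁿ → Gⁿ be the map multiplying the j-th coordinate on the left by h and leaving the other coordinates unchanged. Then: (i) for every 1 ≤ j ≤ n, H_{j;h} maps D̄_{g₁,…,gₙ} bijectively onto D̄_{g₁,…,g_{j-1},h·g_j·h⁻¹,g_{j+1},…,gₙ}; and (ii) for every index 1 ≤ i ≤ n-1 and every (b₁,…,bₙ) ∈ Gⁿ, H_{i+1;h}(Ψ_i[gᵢ](b₁,…,bₙ)) = Ψ_i[h·gᵢ·h⁻¹](H_{i;h}(b₁,…,bₙ)). -/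

import Mathlib

/-- `Ψ_i[g]` (0-indexed here: `i` ranges over `0,…,n-2`, corresponding to the 1-indexed
positions `i+1, i+2`): the map sending `(b₁,…,bₙ)` to the tuple whose `i`-th entry is
`b_{i+1}·b_i⁻¹·g⁻¹·b_i`, whose `(i+1)`-th entry is `b_i`, all other entries unchanged. -/
def Psi {G : Type*} [Group G] {n : ℕ} (g : G) (i : ℕ) (hi : i + 1 < n)
    (b : Fin n → G) : Fin n → G := fun j =>
  if j = (⟨i, Nat.lt_of_succ_lt hi⟩ : Fin n) then
    b ⟨i + 1, hi⟩ * (b ⟨i, Nat.lt_of_succ_lt hi⟩)⁻¹ * g⁻¹ * b ⟨i, Nat.lt_of_succ_lt hi⟩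
  else if j = (⟨i + 1, hi⟩ : Fin n) then b ⟨i, Nat.lt_of_succ_lt hi⟩
  else b j

/-- `D̄_{g₁,…,gₙ}` : the set of tuples `(b₁,…,bₙ)` with
`(b₁⁻¹·g₁·b₁)·(b₂⁻¹·g₂·b₂)·⋯·(bₙ⁻¹·gₙ·bₙ) = 1`. -/
def Dbar {G : Type*} [Group G] {n : ℕ} (g : Fin n → G) : Set (Fin n → G) :=
  {b | (List.ofFn fun i => (b i)⁻¹ * g i * b i).prod = 1}

/-- `H_{j;h}` : multiply the `j`-th coordinate on the left by `h`, leaving the other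
coordinates unchanged. -/
def Hm {G : Type*} [Group G] {n : ℕ} (h : G) (j : Fin n) (b : Fin n → G) : Fin n → G :=
  Function.update b j (h * b j)

/-!
Both parts are instances of facts about left multiplication by an arbitrary tuple `a ∈ Gⁿ`,
applied to the tuple `a` with entry `h` at `j` and `1` elsewhere. Replacing `b` by `a * b` and
`g` by `a * g * a⁻¹` leaves every factor `bₖ⁻¹ gₖ bₖ` unchanged, so it preserves the equation
defining `D̄`. Moving left multiplication by `a` through `Ψ_i` conjugates the parameter of `Ψ_i`
by `aᵢ` and exchanges the entries of `a` at `i` and `i + 1`.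
-/

section

variable {G : Type*} [Group G] {n : ℕ}

theorem Hm_eq_mulSingle_mul (h : G) (j : Fin n) (b : Fin n → G) :
    Hm h j b = Pi.mulSingle j h * b := by
  ext k
  rcases eq_or_ne k j with rfl | hkj
  · simp [Hm]
  · simp [Hm, hkj]

theorem update_conj_eq_mulSingle_conj {ι : Type*} [DecidableEq ι] (g : ι → G) (j : ι) (h : G) :
    Function.update g j (h * g j * h⁻¹) = Pi.mulSingle j h * g * (Pi.mulSingle j h)⁻¹ := by
  ext k
  rcases eq_or_ne k j with rfl | hkj
  · simp
  · simp [hkj]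

theorem mul_mem_Dbar_conj_iff (a b g : Fin n → G) :
    a * b ∈ Dbar (a * g * a⁻¹) ↔ b ∈ Dbar g := by
  have factor_eq (i : Fin n) :
      ((a * b) i)⁻¹ * (a * g * a⁻¹) i * (a * b) i = (b i)⁻¹ * g i * b i := by
    simp [mul_assoc]
  simp only [Dbar, Set.mem_ofPred_eq, factor_eq]

theorem bijOn_mul_left_Dbar_conj (a g : Fin n → G) :
    Set.BijOn (a * ·) (Dbar g) (Dbar (a * g * a⁻¹)) :=
  (Equiv.mulLeft a).bijOn fun b => mul_mem_Dbar_conj_iff a b g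

theorem bijOn_Hm_Dbar (g : Fin n → G) (h : G) (j : Fin n) :
    Set.BijOn (Hm h j) (Dbar g) (Dbar (Function.update g j (h * g j * h⁻¹))) := by
  rw [funext (Hm_eq_mulSingle_mul h j), update_conj_eq_mulSingle_conj]
  exact bijOn_mul_left_Dbar_conj (Pi.mulSingle j h) g

theorem Psi_apply_left (g : G) (i : ℕ) (hi : i + 1 < n) (b : Fin n → G) :
    Psi g i hi b ⟨i, Nat.lt_of_succ_lt hi⟩ =
      b ⟨i + 1, hi⟩ * (b ⟨i, Nat.lt_of_succ_lt hi⟩)⁻¹ * g⁻¹ * b ⟨i, Nat.lt_of_succ_lt hi⟩ := by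
  simp [Psi]

theorem Psi_apply_right (g : G) (i : ℕ) (hi : i + 1 < n) (b : Fin n → G) :
    Psi g i hi b ⟨i + 1, hi⟩ = b ⟨i, Nat.lt_of_succ_lt hi⟩ := by
  simp [Psi]

theorem Psi_apply_of_ne (g : G) (i : ℕ) (hi : i + 1 < n) (b : Fin n → G) {k : Fin n}
    (hleft : k ≠ ⟨i, Nat.lt_of_succ_lt hi⟩) (hright : k ≠ ⟨i + 1, hi⟩) :
    Psi g i hi b k = b k := by
  simp [Psi, hleft, hright]

theorem Psi_conj_mul (g : G) (i : ℕ) (hi : i + 1 < n) (a b : Fin n → G) :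
    Psi (a ⟨i, Nat.lt_of_succ_lt hi⟩ * g * (a ⟨i, Nat.lt_of_succ_lt hi⟩)⁻¹) i hi (a * b) =
      (a ∘ Equiv.swap ⟨i, Nat.lt_of_succ_lt hi⟩ ⟨i + 1, hi⟩) * Psi g i hi b := by
  ext k
  by_cases hleft : k = ⟨i, Nat.lt_of_succ_lt hi⟩
  · subst hleft
    simp [Psi_apply_left, mul_assoc]
  by_cases hright : k = ⟨i + 1, hi⟩
  · subst hright
    simp [Psi_apply_right]
  · simp [Psi_apply_of_ne, hleft, hright, Equiv.swap_apply_of_ne_of_ne]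

theorem Hm_Psi (g h : G) (i : ℕ) (hi : i + 1 < n) (b : Fin n → G) :
    Hm h ⟨i + 1, hi⟩ (Psi g i hi b) =
      Psi (h * g * h⁻¹) i hi (Hm h ⟨i, Nat.lt_of_succ_lt hi⟩ b) := by
  have hconj := Psi_conj_mul g i hi (Pi.mulSingle ⟨i, Nat.lt_of_succ_lt hi⟩ h) b
  rw [Pi.mulSingle_eq_same, Pi.mulSingle_comp_equiv, Equiv.symm_swap,
    Equiv.swap_apply_left] at hconj
  rw [Hm_eq_mulSingle_mul, Hm_eq_mulSingle_mul, hconj]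

end

/-- (i) `H_{j;h}` maps `D̄_{g₁,…,gₙ}` bijectively onto
`D̄_{g₁,…,h·g_j·h⁻¹,…,gₙ}`; (ii) `H_{i+1;h} ∘ Ψ_i[gᵢ] = Ψ_i[h·gᵢ·h⁻¹] ∘ H_{i;h}`
(indices for `Psi` are 0-based: `p = i - 1`). -/
theorem stmt19 {G : Type*} [Group G] {n : ℕ} (hn : 2 ≤ n) (g : Fin n → G) (h : G) :
    (∀ j : Fin n,
      Set.BijOn (Hm h j) (Dbar g) (Dbar (Function.update g j (h * g j * h⁻¹)))) ∧
    (∀ (p : ℕ) (hp : p + 1 < n) (b : Fin n → G),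
      Hm h ⟨p + 1, hp⟩ (Psi (g ⟨p, Nat.lt_of_succ_lt hp⟩) p hp b) =
        Psi (h * g ⟨p, Nat.lt_of_succ_lt hp⟩ * h⁻¹) p hp
          (Hm h ⟨p, Nat.lt_of_succ_lt hp⟩ b)) :=
  ⟨bijOn_Hm_Dbar g h, fun p hp b => Hm_Psi _ h p hp b⟩
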